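/- arXiv:1605.04065 — 2 statements merged into one kernel-verified Lean document; each statement's English description precedes it below -/
import Mathlib

section
/- Every finite normal subgroup F of G is contained in A_μ: for each f ∈ F, lim_{n→∞} μ^{*n}(f)/μ^{*n}(e) = 1. -/
open Filter Topology
open scoped Classical

/-- Convolution of two real-valued functions on a discrete group. -/
noncomputable def conv {G : Type*} [Group G] (μ τ : G → ℝ) : G → ℝ :=
  fun y => ∑' x : G, μ x * τ (x⁻¹ * y)

/-- `n`-fold convolution power, with `μ^{*0}` the Dirac mass at the identity. -/
noncomputable def convPow {G : Type*} [Group G] (μ : G → ℝ) : ℕ → G → ℝ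
  | 0 => fun x => if x = 1 then 1 else 0
  | n + 1 => conv (convPow μ n) μ

/-- `μ` is a probability measure on the discrete group `G`. -/
def IsProb {G : Type*} [Group G] (μ : G → ℝ) : Prop :=
  (∀ x, 0 ≤ μ x) ∧ ∑' x : G, μ x = 1

/-- `μ` is symmetric. -/
def MeasSymm {G : Type*} [Group G] (μ : G → ℝ) : Prop := ∀ x, μ x⁻¹ = μ x

/-- `μ` is aperiodic: `gcd { n ≥ 1 | μ^{*n}(e) > 0 } = 1`. -/
def IsAperiodic {G : Type*} [Group G] (μ : G → ℝ) : Prop :=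
  ∀ d : ℕ, (∀ n : ℕ, 1 ≤ n → 0 < convPow μ n 1 → d ∣ n) → d = 1

/-- The support of `μ` generates `G`. -/
def GeneratingSupport {G : Type*} [Group G] (μ : G → ℝ) : Prop :=
  Subgroup.closure {x : G | 0 < μ x} = ⊤

/-- The set `A_μ = { g | μ^{*n}(g)/μ^{*n}(e) → 1 }`. -/
def Amu {G : Type*} [Group G] (μ : G → ℝ) : Set G :=
  {g | Tendsto (fun n => convPow μ n g / convPow μ n 1) atTop (𝓝 1)}

/-- ℓ² inner product. -/
noncomputable def l2inner {G : Type*} (f h : G → ℝ) : ℝ := ∑' x : G, f x * h x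

/-- ℓ² norm. -/
noncomputable def l2norm {G : Type*} (f : G → ℝ) : ℝ :=
  Real.sqrt (∑' x : G, (f x) ^ 2)

/-- Left translation: `(g · f)(x) = f (g⁻¹ x)`. -/
def ltrans {G : Type*} [Group G] (g : G) (f : G → ℝ) : G → ℝ := fun x => f (g⁻¹ * x)

/-- The normalized convolution powers `ξ_n = μ^{*n}/‖μ^{*n}‖₂`. -/
noncomputable def xi {G : Type*} [Group G] (μ : G → ℝ) (n : ℕ) : G → ℝ :=
  fun x => convPow μ n x / l2norm (convPow μ n)

/-- Reiter-type characterization of amenability: a sequence of almost-invariant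
unit vectors in `ℓ²(K)`. -/
def ReiterAmenable (K : Type*) [Group K] : Prop :=
  ∃ ψ : ℕ → K → ℝ, (∀ n, ∑' x : K, (ψ n x) ^ 2 = 1) ∧
    ∀ k : K, Tendsto
      (fun n => Real.sqrt (∑' x : K, (ψ n (k⁻¹ * x) - ψ n x) ^ 2)) atTop (𝓝 0)

/-!
Some convolution power `a ^ k` of the step distribution `a` charges every point of `F`, so it
splits as `v + u` with `u` a positive multiple of the uniform measure on `F`. As `F` is normal, `u`
is central, hence `(v + u) ^ m = v ^ m + s * u`, and `s * u` is constant on the cosets of `F`: the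
values of `(v + u) ^ m` at `f ∈ F` and at `1` differ only through `v ^ m`. This difference is
negligible. For `m = 2 * n + 1` it is at most `(v ^ (2 * n)) 1` by Cauchy–Schwarz, while the
Bernoulli inequality bounds `((v + u) ^ m) 1` below by `m * c * (v ^ (2 * n)) 1`, where `c` is the
value of `u` on `F`. So the ratio tends to `1` along odd multiples of `k`; a further factor
`b = a ^ r` on the left changes nothing and covers the other residue classes.
-/

open scoped ENNReal

section Semiring

variable {R : Type*} [Semiring R] {a b : R}

lemma exists_add_pow_eq_pow_add_mul_of_commute (hab : Commute a b) (n : ℕ) :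
    ∃ s, (a + b) ^ n = a ^ n + s * b := by
  induction n with
  | zero => exact ⟨0, by simp⟩
  | succ n ih =>
    obtain ⟨s, hs⟩ := ih
    refine ⟨a ^ n + s * (a + b), ?_⟩
    rw [pow_succ, hs, add_mul, mul_add, ← pow_succ, mul_assoc, ← (hab.add_left (.refl b)).eq]
    simp only [add_mul, add_assoc, mul_assoc]

end Semiring

lemma two_mul_mul_le_add_sq_of_canonicallyOrdered {R : Type*} [CommSemiring R] [LinearOrder R]
    [CanonicallyOrderedAdd R] (a b : R) : 2 * a * b ≤ a ^ 2 + b ^ 2 := by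
  wlog hab : a ≤ b generalizing a b
  · simpa only [mul_right_comm, add_comm] using this b a (le_of_not_ge hab)
  obtain ⟨d, rfl⟩ := le_iff_exists_add.1 hab
  exact le_iff_exists_add.2 ⟨d ^ 2, by ring⟩

section Limits

lemma tendsto_atTop_of_forall_residue {α : Type*} {u : ℕ → α} {l : Filter α} {k : ℕ} (hk : 0 < k)
    (h : ∀ r < k, Tendsto (fun n => u (r + k * n)) atTop l) : Tendsto u atTop l := by
  rw [tendsto_def]
  intro s hs
  have hall : ∀ᶠ n in atTop, ∀ r ∈ Set.Iio k, u (r + k * n) ∈ s :=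
    (eventually_all_finite (Set.finite_Iio k)).2 fun r hr => h r hr hs
  filter_upwards [(Nat.tendsto_div_const_atTop hk.ne').eventually hall] with n hn
  simpa only [Set.mem_preimage, Nat.mod_add_div] using hn (n % k) (Nat.mod_lt n hk)

lemma tendsto_mul_natCast_mul_nhds_top {ι : Type*} {l : Filter ι} {u : ι → ℕ} {b c : ℝ≥0∞}
    (hb : b ≠ 0) (hc : c ≠ 0) (hu : Tendsto u l atTop) :
    Tendsto (fun i => b * (u i * c)) l (𝓝 ∞) := by
  have hmul : Tendsto (fun i => u i * c) l (𝓝 ∞) := by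
    simpa only [ENNReal.top_mul hc, Function.comp_apply] using
      ENNReal.Tendsto.mul_const (b := c) (ENNReal.tendsto_nat_nhds_top.comp hu)
        (.inl ENNReal.top_ne_zero)
  simpa only [ENNReal.mul_top hb] using
    ENNReal.Tendsto.const_mul (a := b) hmul (.inl ENNReal.top_ne_zero)

lemma tendsto_div_one_of_le_add {ι : Type*} {l : Filter ι} {a b s L : ι → ℝ≥0∞}
    (hb₀ : ∀ i, b i ≠ 0) (hb : ∀ i, b i ≠ ∞) (hab : ∀ i, a i ≤ b i + s i)
    (hba : ∀ i, b i ≤ a i + s i) (hs : ∀ i, L i * s i ≤ b i) (hL : Tendsto L l (𝓝 ∞)) :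
    Tendsto (fun i => a i / b i) l (𝓝 1) := by
  have hone (i : ι) : b i / b i = 1 := ENNReal.div_self (hb₀ i) (hb i)
  have herr (i : ι) : s i / b i ≤ (L i)⁻¹ := by
    rw [ENNReal.le_inv_iff_mul_le, ENNReal.div_eq_inv_mul, mul_assoc, mul_comm (s i),
      ← ENNReal.div_eq_inv_mul, ← hone i]
    exact ENNReal.div_le_div_right (hs i) (b i)
  have hupper (i : ι) : a i / b i ≤ 1 + (L i)⁻¹ :=
    calc a i / b i ≤ (b i + s i) / b i := ENNReal.div_le_div_right (hab i) (b i)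
      _ = 1 + s i / b i := by rw [ENNReal.add_div, hone]
      _ ≤ 1 + (L i)⁻¹ := by gcongr; exact herr i
  have hlower (i : ι) : 1 - (L i)⁻¹ ≤ a i / b i := by
    refine tsub_le_iff_right.2 ?_
    calc 1 = b i / b i := (hone i).symm
      _ ≤ (a i + s i) / b i := ENNReal.div_le_div_right (hba i) (b i)
      _ = a i / b i + s i / b i := ENNReal.add_div
      _ ≤ a i / b i + (L i)⁻¹ := by gcongr; exact herr i
  have hL' : Tendsto (fun i => (L i)⁻¹) l (𝓝 0) := by simpa only [ENNReal.inv_top] using hL.inv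
  refine tendsto_of_tendsto_of_tendsto_of_le_of_le ?_ ?_ hlower hupper
  · simpa only [tsub_zero] using
      ENNReal.Tendsto.sub (tendsto_const_nhds (x := 1)) hL' (.inl ENNReal.one_ne_top)
  · simpa only [add_zero] using (tendsto_const_nhds (x := (1 : ℝ≥0∞))).add hL'

end Limits

/-- Extended nonnegative functions on a group, with convolution as product. Values in `ℝ≥0∞` make
every convolution sum converge, so that these functions form a semiring. -/
def ConvFun (G : Type*) : Type _ := G → ℝ≥0∞

namespace ConvFun

variable {G : Type*}

noncomputable instance : AddCommMonoid (ConvFun G) := inferInstanceAs (AddCommMonoid (G → ℝ≥0∞))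

noncomputable instance : PartialOrder (ConvFun G) := inferInstanceAs (PartialOrder (G → ℝ≥0∞))

instance : IsOrderedAddMonoid (ConvFun G) := inferInstanceAs (IsOrderedAddMonoid (G → ℝ≥0∞))

instance : CanonicallyOrderedAdd (ConvFun G) :=
  inferInstanceAs (CanonicallyOrderedAdd (G → ℝ≥0∞))

lemma zero_apply (x : G) : (0 : ConvFun G) x = 0 := rfl

lemma add_apply (a b : ConvFun G) (x : G) : (a + b) x = a x + b x := rfl

lemma nsmul_apply (n : ℕ) (a : ConvFun G) (x : G) : (n • a) x = n * a x := nsmul_eq_mul n (a x)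

variable [Group G]

noncomputable instance : One (ConvFun G) := ⟨fun x => if x = 1 then 1 else 0⟩

noncomputable instance : Mul (ConvFun G) := ⟨fun a b y => ∑' x, a x * b (x⁻¹ * y)⟩

lemma one_apply (x : G) : (1 : ConvFun G) x = if x = 1 then 1 else 0 := rfl

lemma mul_apply (a b : ConvFun G) (y : G) : (a * b) y = ∑' x, a x * b (x⁻¹ * y) := rfl

protected lemma one_mul (a : ConvFun G) : 1 * a = a := by
  funext y
  rw [mul_apply, tsum_eq_single 1 fun x hx => by simp [one_apply, hx]]
  simp [one_apply]

protected lemma mul_one (a : ConvFun G) : a * 1 = a := by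
  funext y
  rw [mul_apply, tsum_eq_single y fun x hx => by simp [one_apply, inv_mul_eq_one, hx]]
  simp [one_apply]

protected lemma mul_assoc (a b c : ConvFun G) : a * b * c = a * (b * c) := by
  funext y
  simp only [mul_apply, ← ENNReal.tsum_mul_left, ← ENNReal.tsum_mul_right]
  rw [ENNReal.tsum_comm]
  refine tsum_congr fun x => ?_
  rw [← (Equiv.mulLeft x).tsum_eq]
  simp [mul_assoc]

noncomputable instance : Semiring (ConvFun G) where
  __ := (inferInstance : AddCommMonoid (ConvFun G))
  zero_mul a := by
    funext y
    simp only [mul_apply, zero_apply, zero_mul, tsum_zero]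
  mul_zero a := by
    funext y
    simp only [mul_apply, zero_apply, mul_zero, tsum_zero]
  left_distrib a b c := by
    funext y
    simp only [mul_apply, add_apply, mul_add, ENNReal.tsum_add]
  right_distrib a b c := by
    funext y
    simp only [mul_apply, add_apply, add_mul, ENNReal.tsum_add]
  mul_assoc := ConvFun.mul_assoc
  one_mul := ConvFun.one_mul
  mul_one := ConvFun.mul_one

instance : IsOrderedRing (ConvFun G) where
  zero_le_one := zero_le
  mul_le_mul_of_nonneg_left _ _ _ _ h _ :=
    ENNReal.tsum_le_tsum fun _ => mul_le_mul' le_rfl (h _)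
  mul_le_mul_of_nonneg_right _ _ _ _ h _ :=
    ENNReal.tsum_le_tsum fun _ => mul_le_mul' (h _) le_rfl

noncomputable instance : StarRing (ConvFun G) where
  star a x := a x⁻¹
  star_involutive a := by funext x; exact congrArg a (inv_inv x)
  star_add a b := rfl
  star_mul a b := by
    funext y
    change ∑' x, a x * b (x⁻¹ * y⁻¹) = ∑' x, b x⁻¹ * a (x⁻¹ * y)⁻¹
    rw [← (Equiv.mulLeft y⁻¹).tsum_eq]
    simp [mul_comm]

lemma star_apply (a : ConvFun G) (x : G) : star a x = a x⁻¹ := rfl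

lemma mul_le_mul_apply_mul (a b : ConvFun G) (x y : G) : a x * b y ≤ (a * b) (x * y) :=
  calc a x * b y = a x * b (x⁻¹ * (x * y)) := by rw [inv_mul_cancel_left]
    _ ≤ (a * b) (x * y) := ENNReal.le_tsum (f := fun z => a z * b (z⁻¹ * (x * y))) x

lemma mul_apply_pos {a b : ConvFun G} {x y : G} (hx : 0 < a x) (hy : 0 < b y) :
    0 < (a * b) (x * y) :=
  (ENNReal.mul_pos hx.ne' hy.ne').trans_le (mul_le_mul_apply_mul a b x y)

lemma mul_apply_one_pos {a b : ConvFun G} (ha : 0 < a 1) (hb : 0 < b 1) : 0 < (a * b) 1 := by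
  simpa only [mul_one] using mul_apply_pos ha hb

lemma pow_apply_one_pos {a : ConvFun G} (ha : 0 < a 1) (n : ℕ) : 0 < (a ^ n) 1 := by
  induction n with
  | zero => simp [one_apply]
  | succ n ih => rw [pow_succ]; exact mul_apply_one_pos ih ha

/-- The total mass of a function, multiplicative for the convolution product. -/
noncomputable def mass : ConvFun G →+* ℝ≥0∞ where
  toFun a := ∑' x, a x
  map_zero' := tsum_zero
  map_one' := by simp [one_apply]
  map_add' _ _ := ENNReal.tsum_add
  map_mul' a b :=
    calc ∑' y, (a * b) y = ∑' x, ∑' y, a x * b (x⁻¹ * y) := ENNReal.tsum_comm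
      _ = ∑' x, a x * ∑' y, b y :=
        tsum_congr fun x =>
          ENNReal.tsum_mul_left.trans (congrArg (a x * ·) ((Equiv.mulLeft x⁻¹).tsum_eq b))
      _ = (∑' x, a x) * ∑' y, b y := ENNReal.tsum_mul_right

lemma apply_le_mass (a : ConvFun G) (x : G) : a x ≤ mass a := ENNReal.le_tsum x

lemma mass_mono {a b : ConvFun G} (h : a ≤ b) : mass a ≤ mass b := ENNReal.tsum_le_tsum h

lemma mul_apply_le_of_mass_le_one {a b : ConvFun G} {C : ℝ≥0∞} (ha : mass a ≤ 1)
    (hb : ∀ x, b x ≤ C) (y : G) : (a * b) y ≤ C :=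
  calc (a * b) y ≤ ∑' x, a x * C := ENNReal.tsum_le_tsum fun _ => mul_le_mul' le_rfl (hb _)
    _ = mass a * C := ENNReal.tsum_mul_right
    _ ≤ C := mul_le_of_le_one_left' ha

lemma mul_star_self_apply_le (a : ConvFun G) (y : G) : (a * star a) y ≤ (a * star a) 1 := by
  have hdiag : (a * star a) 1 = ∑' x, a x ^ 2 := by
    simp only [mul_apply, star_apply, mul_one, inv_inv, sq]
  have hshift : ∑' x, a (y⁻¹ * x) ^ 2 = ∑' x, a x ^ 2 :=
    (Equiv.mulLeft y⁻¹).tsum_eq fun x => a x ^ 2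
  have htwo : 2 * (a * star a) y ≤ 2 * (a * star a) 1 :=
    calc 2 * (a * star a) y = ∑' x, 2 * a x * a (y⁻¹ * x) := by
          simp only [mul_apply, star_apply, mul_inv_rev, inv_inv, ← ENNReal.tsum_mul_left,
            ← mul_assoc]
      _ ≤ ∑' x, (a x ^ 2 + a (y⁻¹ * x) ^ 2) :=
          ENNReal.tsum_le_tsum fun x => two_mul_mul_le_add_sq_of_canonicallyOrdered _ _
      _ = 2 * (a * star a) 1 := by rw [ENNReal.tsum_add, hshift, hdiag, two_mul]
  exact (ENNReal.mul_le_mul_iff_right two_ne_zero ENNReal.ofNat_ne_top).1 htwo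

lemma even_pow_apply_le {a : ConvFun G} (ha : IsSelfAdjoint a) (n : ℕ) (x : G) :
    (a ^ (2 * n)) x ≤ (a ^ (2 * n)) 1 := by
  have h : a ^ (2 * n) = a ^ n * star (a ^ n) := by rw [(ha.pow n).star_eq, two_mul, pow_add]
  rw [h]
  exact mul_star_self_apply_le (a ^ n) x

lemma commute_of_apply_mul_comm {b : ConvFun G} (hb : ∀ x y, b (x * y) = b (y * x))
    (a : ConvFun G) : Commute a b := by
  funext y
  calc ∑' x, a x * b (x⁻¹ * y) = ∑' x, b (y / x) * a ((y / x)⁻¹ * y) := by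
        simp only [div_eq_mul_inv, mul_inv_rev, inv_inv, inv_mul_cancel_right, hb y, mul_comm]
    _ = ∑' x, b x * a (x⁻¹ * y) := (Equiv.divLeft y).tsum_eq fun x => b x * a (x⁻¹ * y)

/-- The function equal to `c` on the subgroup `F` and to `0` elsewhere: up to normalization, the
uniform measure on `F`. -/
noncomputable def constOn (F : Subgroup G) (c : ℝ≥0∞) : ConvFun G :=
  fun x => if x ∈ F then c else 0

variable {F : Subgroup G} {c : ℝ≥0∞}

lemma commute_constOn (hF : F.Normal) (a : ConvFun G) : Commute a (constOn F c) :=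
  commute_of_apply_mul_comm (fun x y => by simp only [constOn, hF.mem_comm_iff]) a

lemma isSelfAdjoint_constOn : IsSelfAdjoint (constOn F c) := by
  funext x
  simp only [star_apply, constOn, inv_mem_iff]

lemma mul_constOn_apply_mul (a : ConvFun G) (x : G) {f : G} (hf : f ∈ F) :
    (a * constOn F c) (x * f) = (a * constOn F c) x := by
  simp only [mul_apply, constOn, ← mul_assoc, F.mul_mem_cancel_right hf]

lemma mul_add_constOn_pow_apply_mul_le (hF : F.Normal) (a v : ConvFun G) (n : ℕ) (x : G) {f : G}
    (hf : f ∈ F) :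
    (a * (v + constOn F c) ^ n) (x * f) ≤
      (a * (v + constOn F c) ^ n) x + (a * v ^ n) (x * f) := by
  obtain ⟨s, hs⟩ := exists_add_pow_eq_pow_add_mul_of_commute (commute_constOn (c := c) hF v) n
  rw [hs, mul_add, ← mul_assoc, add_apply, add_apply, mul_constOn_apply_mul _ _ hf, add_comm]
  gcongr
  exact le_add_self

lemma mul_pow_apply_le_add_constOn_pow_apply (hF : F.Normal) (v : ConvFun G) (n : ℕ) (x : G) :
    (n + 1 : ℕ) * c * (v ^ n) x ≤ ((v + constOn F c) ^ (n + 1)) x := by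
  have hbernoulli : v ^ (n + 1) + (n + 1 : ℕ) * v ^ n * constOn F c ≤
      (v + constOn F c) ^ (n + 1) :=
    (commute_constOn hF v).pow_add_mul_le_add_pow_of_sq_nonneg zero_le zero_le zero_le zero_le
      (n + 1)
  calc (n + 1 : ℕ) * c * (v ^ n) x = (n + 1 : ℕ) * ((v ^ n) x * constOn F c 1) := by
        rw [constOn, if_pos F.one_mem, mul_assoc, mul_comm c]
    _ ≤ (n + 1 : ℕ) * (v ^ n * constOn F c) x := by
        gcongr
        simpa only [mul_one] using mul_le_mul_apply_mul (v ^ n) (constOn F c) x 1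
    _ = ((n + 1 : ℕ) * v ^ n * constOn F c) x := by
        rw [mul_assoc, ← nsmul_eq_mul _ (v ^ n * constOn F c), nsmul_apply]
    _ ≤ ((v + constOn F c) ^ (n + 1)) x := (le_add_self.trans hbernoulli) x

lemma apply_ne_top_of_mass_le_one {a : ConvFun G} (ha : mass a ≤ 1) (x : G) : a x ≠ ∞ :=
  ne_top_of_le_ne_top ENNReal.one_ne_top ((apply_le_mass a x).trans ha)

lemma mass_pow_le_one {a : ConvFun G} (ha : mass a ≤ 1) (n : ℕ) : mass (a ^ n) ≤ 1 := by
  rw [map_pow]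
  exact pow_le_one' ha n

lemma exists_eq_add_constOn (hfin : (F : Set G).Finite) {a : ConvFun G} (ha : IsSelfAdjoint a)
    (hpos : ∀ f ∈ F, 0 < a f) :
    ∃ c ≠ 0, ∃ v, IsSelfAdjoint v ∧ a = v + constOn F c := by
  obtain ⟨f₀, hf₀, hmin⟩ := Set.exists_min_image (F : Set G) a hfin ⟨1, F.one_mem⟩
  have hle (x : G) : constOn F (a f₀) x ≤ a x := by
    rw [constOn]
    split_ifs with hx
    exacts [hmin x hx, zero_le]
  refine ⟨a f₀, (hpos f₀ hf₀).ne', fun x => a x - constOn F (a f₀) x, ?_, ?_⟩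
  · funext x
    exact congrArg₂ (· - ·) (congrFun ha x) (congrFun isSelfAdjoint_constOn x)
  · funext x
    exact (tsub_add_cancel_of_le (hle x)).symm

lemma mul_odd_pow_apply_le {b v : ConvFun G} (hb : mass b ≤ 1) (hvm : mass v ≤ 1)
    (hv : IsSelfAdjoint v) (n : ℕ) (x : G) : (b * v ^ (2 * n + 1)) x ≤ (v ^ (2 * n)) 1 := by
  rw [pow_succ', ← mul_assoc]
  refine mul_apply_le_of_mass_le_one ?_ (even_pow_apply_le hv n) x
  rw [map_mul]
  exact mul_le_one' hb hvm

lemma tendsto_mul_odd_pow_div {b v : ConvFun G} (hF : F.Normal) (hb : mass b ≤ 1) (hb₁ : b 1 ≠ 0)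
    (hv : IsSelfAdjoint v) (hc : c ≠ 0) (hp : mass (v + constOn F c) ≤ 1) {f : G} (hf : f ∈ F) :
    Tendsto (fun n => (b * (v + constOn F c) ^ (2 * n + 1)) f /
      (b * (v + constOn F c) ^ (2 * n + 1)) 1) atTop (𝓝 1) := by
  set p := v + constOn F c with hp_def
  have hvm : mass v ≤ 1 := (mass_mono le_self_add).trans hp
  have hosc {x y : G} (hxy : x⁻¹ * y ∈ F) (n : ℕ) :
      (b * p ^ (2 * n + 1)) y ≤ (b * p ^ (2 * n + 1)) x + (v ^ (2 * n)) 1 := by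
    have h := mul_add_constOn_pow_apply_mul_le (c := c) hF b v (2 * n + 1) x hxy
    rw [mul_inv_cancel_left] at h
    exact h.trans (by gcongr; exact mul_odd_pow_apply_le hb hvm hv n y)
  have hmain (n : ℕ) :
      b 1 * ((2 * n + 1 : ℕ) * c) * (v ^ (2 * n)) 1 ≤ (b * p ^ (2 * n + 1)) 1 :=
    calc b 1 * ((2 * n + 1 : ℕ) * c) * (v ^ (2 * n)) 1 ≤ b 1 * (p ^ (2 * n + 1)) 1 := by
          rw [mul_assoc]
          gcongr
          exact mul_pow_apply_le_add_constOn_pow_apply hF v (2 * n) 1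
      _ ≤ (b * p ^ (2 * n + 1)) 1 := by
          simpa only [mul_one] using mul_le_mul_apply_mul b (p ^ (2 * n + 1)) 1 1
  have hp₁ : 0 < p 1 := (pos_iff_ne_zero.2 hc).trans_le (by simp [hp_def, add_apply, constOn])
  have hpos (n : ℕ) : (b * p ^ (2 * n + 1)) 1 ≠ 0 :=
    (mul_apply_one_pos (pos_iff_ne_zero.2 hb₁) (pow_apply_one_pos hp₁ _)).ne'
  have hfin (n : ℕ) : (b * p ^ (2 * n + 1)) 1 ≠ ∞ :=
    apply_ne_top_of_mass_le_one (by rw [map_mul]; exact mul_le_one' hb (mass_pow_le_one hp _)) 1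
  have hL : Tendsto (fun n : ℕ => b 1 * ((2 * n + 1 : ℕ) * c)) atTop (𝓝 ∞) :=
    tendsto_mul_natCast_mul_nhds_top hb₁ hc (StrictMono.tendsto_atTop fun m n hmn => by lia)
  exact tendsto_div_one_of_le_add hpos hfin (hosc (by simpa using hf)) (hosc (by simpa using hf))
    hmain hL

theorem tendsto_pow_div_pow (hF : F.Normal) (hfin : (F : Set G).Finite) {a : ConvFun G}
    (ham : mass a ≤ 1) (ha : IsSelfAdjoint a) (hpos : ∀ᶠ n in atTop, ∀ f ∈ F, 0 < (a ^ n) f)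
    {f : G} (hf : f ∈ F) : Tendsto (fun n => (a ^ n) f / (a ^ n) 1) atTop (𝓝 1) := by
  obtain ⟨M, hM⟩ := eventually_atTop.1 hpos
  obtain ⟨c, hc, v, hv, hav⟩ := exists_eq_add_constOn hfin (ha.pow (M + 1)) (hM (M + 1) M.le_succ)
  rw [← tendsto_add_atTop_iff_nat (M + (M + 1))]
  refine tendsto_atTop_of_forall_residue (k := 2 * (M + 1)) (by positivity) fun r _ => ?_
  have hsplit (n : ℕ) : a ^ (r + 2 * (M + 1) * n + (M + (M + 1))) =
      a ^ (M + r) * (v + constOn F c) ^ (2 * n + 1) := by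
    rw [← hav, ← pow_mul, ← pow_add]
    ring_nf
  simp only [hsplit]
  exact tendsto_mul_odd_pow_div hF (mass_pow_le_one ham _)
    (hM (M + r) (M.le_add_right r) 1 F.one_mem).ne' hv hc (hav ▸ mass_pow_le_one ham _) hf

/-- The times at which `a ^ n` charges the identity, i.e. the possible return times of the random
walk with step distribution `a`. -/
def returnTimes (a : ConvFun G) : AddSubmonoid ℕ where
  carrier := {n | 0 < (a ^ n) 1}
  zero_mem' := by simp [one_apply]
  add_mem' {m n} hm hn := by
    change 0 < (a ^ (m + n)) 1
    rw [pow_add]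
    exact mul_apply_one_pos hm hn

lemma mem_returnTimes {a : ConvFun G} {n : ℕ} : n ∈ returnTimes a ↔ 0 < (a ^ n) 1 := Iff.rfl

lemma eventually_pow_apply_one_pos {a : ConvFun G}
    (ha : Nat.setGcd (returnTimes a : Set ℕ) = 1) : ∀ᶠ n in atTop, 0 < (a ^ n) 1 := by
  obtain ⟨N, hN⟩ := Nat.exists_mem_closure_of_ge (returnTimes a : Set ℕ)
  filter_upwards [eventually_ge_atTop N] with n hn
  rw [AddSubmonoid.closure_eq] at hN
  exact hN n hn (ha ▸ one_dvd n)

lemma exists_pow_apply_pos {a : ConvFun G} (ha : IsSelfAdjoint a) {x : G}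
    (hx : x ∈ Subgroup.closure {y | 0 < a y}) : ∃ n, 0 < (a ^ n) x := by
  induction hx using Subgroup.closure_induction with
  | mem x hx => exact ⟨1, by rwa [pow_one]⟩
  | one => exact ⟨0, by simp [one_apply]⟩
  | mul x y _ _ hx hy =>
    obtain ⟨m, hm⟩ := hx
    obtain ⟨n, hn⟩ := hy
    exact ⟨m + n, by rw [pow_add]; exact mul_apply_pos hm hn⟩
  | inv x _ hx =>
    obtain ⟨n, hn⟩ := hx
    exact ⟨n, hn.trans_eq (congrFun (ha.pow n) x).symm⟩

lemma eventually_pow_apply_pos {a : ConvFun G} (ha : IsSelfAdjoint a)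
    (hgcd : Nat.setGcd (returnTimes a : Set ℕ) = 1) {x : G}
    (hx : x ∈ Subgroup.closure {y | 0 < a y}) : ∀ᶠ n in atTop, 0 < (a ^ n) x := by
  obtain ⟨m, hm⟩ := exists_pow_apply_pos ha hx
  filter_upwards [eventually_ge_atTop m,
    (tendsto_sub_atTop_nat m).eventually (eventually_pow_apply_one_pos hgcd)] with n hmn hn
  rw [← Nat.sub_add_cancel hmn, pow_add]
  simpa only [one_mul] using mul_apply_pos hn hm

/-- The convolution function `x ↦ μ x` of a nonnegative real function `μ`; negative values are
truncated to `0`. -/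
noncomputable def ofReal (μ : G → ℝ) : ConvFun G := fun x => ENNReal.ofReal (μ x)

variable {μ : G → ℝ}

lemma isSelfAdjoint_ofReal (hμ : MeasSymm μ) : IsSelfAdjoint (ofReal μ) := by
  funext x
  rw [star_apply, ofReal, ofReal, hμ]

lemma mass_ofReal (hμ : IsProb μ) : mass (ofReal μ) = 1 := by
  have hsum : Summable μ := by
    by_contra h
    exact zero_ne_one ((tsum_eq_zero_of_not_summable h).symm.trans hμ.2)
  calc mass (ofReal μ) = ENNReal.ofReal (∑' x, μ x) :=
        (ENNReal.ofReal_tsum_of_nonneg hμ.1 hsum).symm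
    _ = 1 := by rw [hμ.2, ENNReal.ofReal_one]

lemma toReal_ofReal_pow_apply (hμ : IsProb μ) (n : ℕ) (y : G) :
    ((ofReal μ ^ n) y).toReal = convPow μ n y := by
  induction n generalizing y with
  | zero => simp only [pow_zero, one_apply, convPow, apply_ite ENNReal.toReal, ENNReal.toReal_one,
      ENNReal.toReal_zero]
  | succ n ih =>
    have hfin (x : G) : (ofReal μ ^ n) x ≠ ∞ :=
      apply_ne_top_of_mass_le_one (mass_pow_le_one (mass_ofReal hμ).le n) x
    rw [pow_succ, mul_apply]
    refine (ENNReal.tsum_toReal_eq fun x =>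
      ENNReal.mul_ne_top (hfin x) ENNReal.ofReal_ne_top).trans (tsum_congr fun x => ?_)
    exact ENNReal.toReal_mul.trans (congrArg₂ (· * ·) (ih x) (ENNReal.toReal_ofReal (hμ.1 _)))

lemma setGcd_returnTimes_ofReal (hμ : IsProb μ) (haper : IsAperiodic μ) :
    Nat.setGcd (returnTimes (ofReal μ) : Set ℕ) = 1 := by
  refine haper _ fun n _ hn => Nat.setGcd_dvd_of_mem ?_
  rw [← toReal_ofReal_pow_apply hμ] at hn
  exact mem_returnTimes.2 (ENNReal.toReal_pos_iff.1 hn).1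

end ConvFun

theorem stmt7_general {G : Type*} [Group G] (μ : G → ℝ)
    (hprob : IsProb μ) (hsymm : MeasSymm μ) (haper : IsAperiodic μ)
    (F : Subgroup G) (hgen : F ≤ Subgroup.closure {x : G | 0 < μ x})
    (hnorm : F.Normal) (hfin : (F : Set G).Finite) :
    (F : Set G) ⊆ Amu μ := by
  intro f hf
  have hself := ConvFun.isSelfAdjoint_ofReal hsymm
  have hgcd := ConvFun.setGcd_returnTimes_ofReal hprob haper
  have hpos : ∀ᶠ n in atTop, ∀ g ∈ F, 0 < (ConvFun.ofReal μ ^ n) g :=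
    (eventually_all_finite hfin).2 fun g hg =>
      ConvFun.eventually_pow_apply_pos hself hgcd <| by
        simpa only [ConvFun.ofReal, ENNReal.ofReal_pos] using hgen hg
  have hlim := ConvFun.tendsto_pow_div_pow hnorm hfin (ConvFun.mass_ofReal hprob).le hself hpos hf
  change Tendsto (fun n => convPow μ n f / convPow μ n 1) atTop (𝓝 1)
  simpa only [ENNReal.toReal_div, ConvFun.toReal_ofReal_pow_apply hprob, ENNReal.toReal_one,
    Function.comp_def] using (ENNReal.tendsto_toReal ENNReal.one_ne_top).comp hlim

theorem stmt7 {G : Type*} [Group G] [Group.FG G] (μ : G → ℝ)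
    (hprob : IsProb μ) (hsymm : MeasSymm μ) (haper : IsAperiodic μ)
    (hgen : GeneratingSupport μ)
    (F : Subgroup G) (hnorm : F.Normal) (hfin : (F : Set G).Finite) :
    (F : Set G) ⊆ Amu μ :=
  stmt7_general μ hprob hsymm haper F (le_of_le_of_eq le_top hgen.symm) hnorm hfin
end

section
/- Let F_d be a free group of rank d ≥ 2 with free basis containing elements a and b, and let μ be a symmetric aperiodic probability measure on F_d with support generating F_d, satisfying μ(e) > 0 and invariant under the automorphism swapping a and b (so in particular μ(a) = μ(b)). Then A_μ is trivial. -/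
open Filter Topology
open scoped Classical

/-!
Suppose `c ∈ A_μ`. The unit vectors `ξ_n` of `ℓ²` are then asymptotically `c`-invariant, so `ξ_n²`
gives vanishing mass to any set `E` whose translates `E, cE, c²E, …` are pairwise disjoint. Since
`μ^{*k}(x) ξ_n(g) ≤ ξ_{n+k}(x g)` and every `x` is charged by some `μ^{*k}`, each translate `xE`
has vanishing mass as well, and finitely many of them cannot cover the group. In a free group of
rank at least two, every `c ≠ 1` has such a set `E` with two translates covering the group: if `c`
is cyclically reduced with first letter `s` and last letter `e`, take for `E` the words beginning
with neither `s` nor `e⁻¹`.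
-/

open scoped Pointwise Function

section SquareSummable

variable {X : Type*} {f g : X → ℝ}

theorem memℓp_two_iff_summable_sq : Memℓp f 2 ↔ Summable fun x => f x ^ 2 := by
  simp [memℓp_gen_iff (p := 2) (by norm_num)]

theorem l2norm_eq_norm (hf : Memℓp f 2) : l2norm f = ‖(⟨f, hf⟩ : lp (fun _ : X => ℝ) 2)‖ := by
  simp [l2norm, lp.norm_eq_tsum_rpow (p := 2) (by norm_num), Real.sqrt_eq_rpow]

theorem l2inner_eq_inner (hf : Memℓp f 2) (hg : Memℓp g 2) :
    l2inner f g = inner ℝ (⟨f, hf⟩ : lp (fun _ : X => ℝ) 2) ⟨g, hg⟩ := by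
  simp [l2inner, lp.inner_eq_tsum, mul_comm]

theorem l2norm_nonneg (f : X → ℝ) : 0 ≤ l2norm f :=
  Real.sqrt_nonneg _

theorem l2norm_sq (f : X → ℝ) : l2norm f ^ 2 = ∑' x, f x ^ 2 :=
  Real.sq_sqrt (tsum_nonneg fun _ => sq_nonneg _)

theorem l2inner_comm (f g : X → ℝ) : l2inner f g = l2inner g f :=
  tsum_congr fun _ => mul_comm _ _

theorem l2inner_self (f : X → ℝ) : l2inner f f = l2norm f ^ 2 := by
  simp only [l2norm_sq, l2inner, ← sq]

theorem l2norm_div_const (f : X → ℝ) {c : ℝ} (hc : 0 ≤ c) :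
    l2norm (fun x => f x / c) = l2norm f / c := by
  simp only [l2norm, div_pow, tsum_div_const, Real.sqrt_div' _ (sq_nonneg c), Real.sqrt_sq hc]

theorem l2inner_div_const (f g : X → ℝ) (c : ℝ) :
    l2inner (fun x => f x / c) (fun x => g x / c) = l2inner f g / c ^ 2 := by
  simp only [l2inner, div_mul_div_comm, tsum_div_const, sq]

theorem l2norm_const_mul (f : X → ℝ) {c : ℝ} (hc : 0 ≤ c) :
    l2norm (fun x => c * f x) = c * l2norm f := by
  simp only [l2norm, mul_pow, tsum_mul_left, Real.sqrt_mul (sq_nonneg c), Real.sqrt_sq hc]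

theorem l2inner_le_l2norm_mul_l2norm (hf : Memℓp f 2) (hg : Memℓp g 2) :
    l2inner f g ≤ l2norm f * l2norm g := by
  rw [l2inner_eq_inner hf hg, l2norm_eq_norm hf, l2norm_eq_norm hg]
  exact real_inner_le_norm _ _

theorem l2norm_sub_le_l2norm_sub (hf : Memℓp f 2) (hg : Memℓp g 2) :
    l2norm f - l2norm g ≤ l2norm (f - g) := by
  rw [l2norm_eq_norm hf, l2norm_eq_norm hg, l2norm_eq_norm (hf.sub hg)]
  exact norm_sub_norm_le (⟨f, hf⟩ : lp (fun _ : X => ℝ) 2) ⟨g, hg⟩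

theorem l2norm_add_le (hf : Memℓp f 2) (hg : Memℓp g 2) :
    l2norm (f + g) ≤ l2norm f + l2norm g := by
  rw [l2norm_eq_norm hf, l2norm_eq_norm hg, l2norm_eq_norm (hf.add hg)]
  exact norm_add_le (⟨f, hf⟩ : lp (fun _ : X => ℝ) 2) ⟨g, hg⟩

theorem l2norm_sub_sq (hf : Memℓp f 2) (hg : Memℓp g 2) :
    l2norm (f - g) ^ 2 = l2norm f ^ 2 - 2 * l2inner f g + l2norm g ^ 2 := by
  rw [l2norm_eq_norm hf, l2norm_eq_norm hg, l2norm_eq_norm (hf.sub hg), l2inner_eq_inner hf hg]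
  exact norm_sub_sq_real (⟨f, hf⟩ : lp (fun _ : X => ℝ) 2) ⟨g, hg⟩

theorem l2norm_le_of_le (hg : Memℓp g 2) (h0 : 0 ≤ f) (h : f ≤ g) : l2norm f ≤ l2norm g := by
  have hsq (x : X) : f x ^ 2 ≤ g x ^ 2 := pow_le_pow_left₀ (h0 x) (h x) 2
  have hg := memℓp_two_iff_summable_sq.mp hg
  exact Real.sqrt_le_sqrt <| (hg.of_nonneg_of_le (fun _ => sq_nonneg _) hsq).tsum_le_tsum hsq hg

theorem memℓp_two_domRestrict (hf : Memℓp f 2) (E : Set X) : Memℓp (E.domRestrict f) 2 :=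
  memℓp_two_iff_summable_sq.mpr ((memℓp_two_iff_summable_sq.mp hf).subtype E)

theorem l2norm_domRestrict_le (hf : Memℓp f 2) (E : Set X) : l2norm (E.domRestrict f) ≤ l2norm f :=
  Real.sqrt_le_sqrt <| (memℓp_two_iff_summable_sq.mp hf).tsum_subtype_le (fun x => f x ^ 2) E
    fun _ => sq_nonneg _

theorem sum_l2norm_domRestrict_sq_le {ι : Type*} {s : Finset ι} {t : ι → Set X} (hf : Memℓp f 2)
    (ht : (s : Set ι).Pairwise (Disjoint on t)) :
    ∑ i ∈ s, l2norm ((t i).domRestrict f) ^ 2 ≤ l2norm f ^ 2 := by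
  have hs := memℓp_two_iff_summable_sq.mp hf
  simp only [l2norm_sq, Set.domRestrict_apply]
  rw [← Summable.tsum_finset_bUnion_disjoint (f := fun x => f x ^ 2) ht
    fun i _ => hs.subtype (t i)]
  exact hs.tsum_subtype_le (fun x => f x ^ 2) _ fun _ => sq_nonneg _

theorem l2norm_sq_le_sum_domRestrict {ι : Type*} {s : Finset ι} {t : ι → Set X} (hf : Memℓp f 2)
    (ht : ⋃ i ∈ s, t i = Set.univ) :
    l2norm f ^ 2 ≤ ∑ i ∈ s, l2norm ((t i).domRestrict f) ^ 2 := by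
  have hs := memℓp_two_iff_summable_sq.mp hf
  have hind (i : ι) : Summable ((t i).indicator fun x => f x ^ 2) := hs.indicator _
  simp only [l2norm_sq, Set.domRestrict_apply, tsum_subtype (t _) fun x => f x ^ 2]
  rw [← Summable.tsum_finsetSum fun i _ => hind i]
  refine hs.tsum_le_tsum (fun x => ?_) (summable_sum fun i _ => hind i)
  obtain ⟨i, hi, hx⟩ := Set.mem_iUnion₂.mp (ht.ge (Set.mem_univ x))
  rw [← Set.indicator_of_mem hx fun x => f x ^ 2]
  exact Finset.single_le_sum (f := fun i => (t i).indicator (fun x => f x ^ 2) x)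
    (fun j _ => Set.indicator_nonneg (fun _ _ => sq_nonneg _) x) hi

end SquareSummable

section Translation

variable {G : Type*} [Group G] {f : G → ℝ}

theorem memℓp_two_ltrans (hf : Memℓp f 2) (g : G) : Memℓp (ltrans g f) 2 :=
  memℓp_two_iff_summable_sq.mpr <|
    (Equiv.mulLeft g⁻¹).summable_iff.mpr (memℓp_two_iff_summable_sq.mp hf)

theorem l2norm_ltrans (g : G) (f : G → ℝ) : l2norm (ltrans g f) = l2norm f :=
  congrArg Real.sqrt ((Equiv.mulLeft g⁻¹).tsum_eq fun x => f x ^ 2)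

theorem ltrans_one (f : G → ℝ) : ltrans 1 f = f := by
  funext x
  simp [ltrans]

theorem ltrans_mul (g h : G) (f : G → ℝ) : ltrans (g * h) f = ltrans g (ltrans h f) := by
  funext x
  simp [ltrans, mul_assoc]

theorem ltrans_sub (g : G) (f h : G → ℝ) : ltrans g (f - h) = ltrans g f - ltrans g h :=
  rfl

theorem l2norm_domRestrict_ltrans (g : G) (E : Set G) (f : G → ℝ) :
    l2norm ((g • E).domRestrict (ltrans g f)) = l2norm (E.domRestrict f) := by
  have h := tsum_image (fun x => ltrans g f x ^ 2) (MulAction.injective g).injOn (s := E)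
  refine congrArg Real.sqrt (h.trans ?_)
  simp [ltrans]

theorem l2norm_ltrans_pow_sub_le (hf : Memℓp f 2) (g : G) (n : ℕ) :
    l2norm (ltrans (g ^ n) f - f) ≤ n * l2norm (ltrans g f - f) := by
  induction n with
  | zero => simp [ltrans_one, l2norm]
  | succ n ih =>
    have hsplit : ltrans (g ^ (n + 1)) f - f =
        ltrans (g ^ n) (ltrans g f - f) + (ltrans (g ^ n) f - f) := by
      rw [pow_succ, ltrans_mul, ltrans_sub, sub_add_sub_cancel]
    have hd := (memℓp_two_ltrans hf g).sub hf
    calc l2norm (ltrans (g ^ (n + 1)) f - f)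
        ≤ l2norm (ltrans g f - f) + l2norm (ltrans (g ^ n) f - f) := by
          rw [hsplit, ← l2norm_ltrans (g ^ n) (ltrans g f - f)]
          exact l2norm_add_le (memℓp_two_ltrans hd _) ((memℓp_two_ltrans hf _).sub hf)
      _ ≤ (n + 1 : ℕ) * l2norm (ltrans g f - f) := by
          push_cast
          linarith

theorem l2norm_domRestrict_sub_le_domRestrict_smul (hf : Memℓp f 2) (g : G) (E : Set G) :
    l2norm (E.domRestrict f) - l2norm ((g • E).domRestrict f) ≤ l2norm (ltrans g f - f) := by
  have hg := memℓp_two_ltrans hf g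
  calc l2norm (E.domRestrict f) - l2norm ((g • E).domRestrict f)
      = l2norm ((g • E).domRestrict (ltrans g f)) - l2norm ((g • E).domRestrict f) := by
        rw [l2norm_domRestrict_ltrans]
    _ ≤ l2norm ((g • E).domRestrict (ltrans g f - f)) :=
        l2norm_sub_le_l2norm_sub (memℓp_two_domRestrict hg _) (memℓp_two_domRestrict hf _)
    _ ≤ l2norm (ltrans g f - f) := l2norm_domRestrict_le (hg.sub hf) _

/-- A subset `E` of a group is wandering for `g` if its translates by the powers `1, g, g², …` are
pairwise disjoint; an almost `g`-invariant vector of `ℓ²` has little mass on such a set. -/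
def IsWandering (g : G) (E : Set G) : Prop :=
  Pairwise (Disjoint on fun i : ℕ => g ^ i • E)

theorem isWandering_compl_union {g : G} {P Q : Set G} (hg : g • Qᶜ ⊆ P) (hPQ : Disjoint P Q) :
    IsWandering g (P ∪ Q)ᶜ := by
  have hPQ' : P ⊆ Qᶜ := hPQ.subset_compl_right
  have hpow (n : ℕ) : g ^ (n + 1) • (P ∪ Q)ᶜ ⊆ P := by
    induction n with
    | zero =>
      rw [zero_add, pow_one]
      exact (Set.smul_set_mono (Set.compl_subset_compl.mpr Set.subset_union_right)).trans hg
    | succ n ih =>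
      rw [pow_succ', mul_smul]
      exact (Set.smul_set_mono (ih.trans hPQ')).trans hg
  refine (pairwise_disjoint_on _).mpr fun i j hij => ?_
  obtain ⟨n, rfl⟩ := Nat.exists_eq_add_of_lt hij
  rw [add_assoc, pow_add, mul_smul, Set.disjoint_smul_set]
  exact (Set.disjoint_compl_left_iff_subset.mpr Set.subset_union_left).mono_right (hpow n)

theorem IsWandering.conj {g : G} {E : Set G} (hE : IsWandering g E) (u : G) :
    IsWandering (u * g * u⁻¹) (u • E) := by
  intro i j hij
  have hsmul (n : ℕ) : (u * g * u⁻¹) ^ n • u • E = u • g ^ n • E := by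
    rw [conj_pow, smul_smul, inv_mul_cancel_right, mul_smul]
  simpa only [Function.onFun, hsmul, Set.disjoint_smul_set] using hE hij

theorem l2norm_domRestrict_le_of_isWandering (hf : Memℓp f 2) {g : G} {E : Set G}
    (hE : IsWandering g E) {N : ℕ} (hN : 0 < N) :
    l2norm (E.domRestrict f) ≤ l2norm f / √N + N * l2norm (ltrans g f - f) := by
  set r := l2norm (E.domRestrict f) - N * l2norm (ltrans g f - f)
  have hr_le (i : ℕ) (hi : i ∈ Finset.range N) : r ≤ l2norm ((g ^ i • E).domRestrict f) := by
    have hiN : (i : ℝ) ≤ N := mod_cast (Finset.mem_range.mp hi).le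
    have h := (l2norm_domRestrict_sub_le_domRestrict_smul hf (g ^ i) E).trans
      (l2norm_ltrans_pow_sub_le hf g i)
    have := mul_le_mul_of_nonneg_right hiN (l2norm_nonneg (ltrans g f - f))
    linarith
  suffices r ≤ l2norm f / √N by linarith
  rcases le_total r 0 with hr0 | hr0
  · exact hr0.trans (div_nonneg (l2norm_nonneg f) (Real.sqrt_nonneg _))
  have hsq : N * r ^ 2 ≤ l2norm f ^ 2 := calc
    N * r ^ 2 = ∑ _i ∈ Finset.range N, r ^ 2 := by simp
    _ ≤ ∑ i ∈ Finset.range N, l2norm ((g ^ i • E).domRestrict f) ^ 2 :=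
      Finset.sum_le_sum fun i hi => pow_le_pow_left₀ hr0 (hr_le i hi) 2
    _ ≤ l2norm f ^ 2 := sum_l2norm_domRestrict_sq_le hf fun i _ j _ hij => hE hij
  rw [le_div_iff₀ (by positivity)]
  refine le_of_sq_le_sq ?_ (l2norm_nonneg f)
  rwa [mul_pow, Real.sq_sqrt N.cast_nonneg, mul_comm]

theorem tendsto_l2norm_domRestrict_of_isWandering {ι : Type*} {l : Filter ι}
    {ξ : ι → G → ℝ} (hξ : ∀ n, Memℓp (ξ n) 2) (hξ1 : ∀ n, l2norm (ξ n) = 1) {g : G} {E : Set G}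
    (hg : Tendsto (fun n => l2norm (ltrans g (ξ n) - ξ n)) l (𝓝 0))
    (hE : IsWandering g E) :
    Tendsto (fun n => l2norm (E.domRestrict (ξ n))) l (𝓝 0) := by
  refine tendsto_order.mpr ⟨fun a ha => .of_forall fun n => ha.trans_le (l2norm_nonneg _),
    fun ε hε => ?_⟩
  have hsqrt : Tendsto (fun N : ℕ => 1 / √N) atTop (𝓝 0) :=
    tendsto_const_nhds.div_atTop (Real.tendsto_sqrt_atTop.comp tendsto_natCast_atTop_atTop)
  obtain ⟨N, hNε, hN⟩ := ((hsqrt.eventually_lt_const hε).and (eventually_gt_atTop 0)).exists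
  have hlim : Tendsto (fun n => 1 / √N + N * l2norm (ltrans g (ξ n) - ξ n)) l (𝓝 (1 / √N)) := by
    simpa using (hg.const_mul (N : ℝ)).const_add (1 / √N)
  filter_upwards [hlim.eventually_lt_const hNε] with n hn
  refine (l2norm_domRestrict_le_of_isWandering (hξ n) hE hN).trans_lt ?_
  rwa [hξ1 n]

end Translation

section Convolution

variable {G : Type*} [Group G] {f g h : G → ℝ}

theorem summable_mul_shear (hf : Summable f) (hg : Summable g) :
    Summable fun p : G × G => f p.1 * g (p.1⁻¹ * p.2) :=
  ((Equiv.refl G).prodShear fun x => Equiv.mulLeft x⁻¹).summable_iff.mpr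
    (summable_mul_of_summable_norm hf.norm hg.norm)

theorem summable_conv_term (hf : Summable f) (hg : Summable g) (y : G) :
    Summable fun x => f x * g (x⁻¹ * y) :=
  (summable_mul_shear hf hg).prod_symm.prod_factor y

theorem tsum_conv (hf : Summable f) (hg : Summable g) :
    ∑' y, conv f g y = (∑' x, f x) * ∑' x, g x := by
  have hinner (x : G) : ∑' y, f x * g (x⁻¹ * y) = f x * ∑' y, g y :=
    tsum_mul_left.trans (congrArg (f x * ·) ((Equiv.mulLeft x⁻¹).tsum_eq g))
  rw [← tsum_mul_right, ← tsum_congr hinner]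
  exact Summable.tsum_comm (f := fun x y => f x * g (x⁻¹ * y)) (summable_mul_shear hf hg)

theorem conv_assoc (hf : Summable f) (hg : Summable g) (hh : Summable h) :
    conv (conv f g) h = conv f (conv g h) := by
  funext y
  have hsum : Summable fun p : G × G => f p.1 * g (p.1⁻¹ * p.2) * h (p.2⁻¹ * y) := by
    refine .of_norm_bounded ((summable_mul_shear hf hg).norm.mul_right (∑' x, ‖h x‖)) fun p => ?_
    rw [norm_mul]
    exact mul_le_mul_of_nonneg_left (hh.norm.le_tsum _ fun _ _ => norm_nonneg _) (norm_nonneg _)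
  have hinner (x : G) : ∑' w, f x * g (x⁻¹ * w) * h (w⁻¹ * y) = f x * conv g h (x⁻¹ * y) := by
    rw [conv, ← tsum_mul_left, ← (Equiv.mulLeft x).tsum_eq]
    simp [mul_assoc]
  calc conv (conv f g) h y
      = ∑' w, ∑' x, f x * g (x⁻¹ * w) * h (w⁻¹ * y) := tsum_congr fun w => tsum_mul_right.symm
    _ = ∑' x, ∑' w, f x * g (x⁻¹ * w) * h (w⁻¹ * y) :=
        Summable.tsum_comm (f := fun x w => f x * g (x⁻¹ * w) * h (w⁻¹ * y)) hsum
    _ = conv f (conv g h) y := tsum_congr hinner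

theorem conv_inv_of_measSymm (hf : MeasSymm f) (hg : MeasSymm g) (x : G) :
    conv f g x⁻¹ = conv g f x := by
  rw [conv, conv, ← (Equiv.mulLeft x⁻¹).tsum_eq]
  refine tsum_congr fun y => ?_
  simp [← hf (x⁻¹ * y), hg y, mul_comm]

theorem l2inner_ltrans_of_measSymm (f : G → ℝ) (hg : MeasSymm g) (x : G) :
    l2inner f (ltrans x g) = conv f g x :=
  tsum_congr fun y => by rw [ltrans, ← hg, mul_inv_rev, inv_inv]

end Convolution

section ProbabilityMeasure

variable {G : Type*} [Group G] {f g μ : G → ℝ}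

namespace IsProb

theorem summable (hμ : IsProb μ) : Summable μ :=
  by_contra fun h => by simpa [tsum_eq_zero_of_not_summable h] using hμ.2

theorem exists_pos (hμ : IsProb μ) : ∃ x, 0 < μ x := by
  by_contra! h
  have h0 : μ = 0 := funext fun x => (h x).antisymm (hμ.1 x)
  simpa [h0] using hμ.2

theorem memℓp_two (hμ : IsProb μ) : Memℓp μ 2 :=
  (memℓp_gen (p := 1) (by simpa using hμ.summable.norm)).of_exponent_ge one_le_two

end IsProb

theorem isProb_conv (hf : IsProb f) (hg : IsProb g) : IsProb (conv f g) :=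
  ⟨fun _ => tsum_nonneg fun x => mul_nonneg (hf.1 x) (hg.1 _), by
    rw [tsum_conv hf.summable hg.summable, hf.2, hg.2, one_mul]⟩

theorem mul_le_conv (hf : IsProb f) (hg : IsProb g) (x y : G) : f x * g y ≤ conv f g (x * y) := by
  simpa [conv] using (summable_conv_term hf.summable hg.summable (x * y)).le_tsum x
    fun z _ => mul_nonneg (hf.1 z) (hg.1 _)

theorem conv_le_of_le (hf : IsProb f) (hg : IsProb g) {C : ℝ} (hC : ∀ x, g x ≤ C) (y : G) :
    conv f g y ≤ C := calc
  conv f g y ≤ ∑' x, f x * C :=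
    (summable_conv_term hf.summable hg.summable y).tsum_le_tsum
      (fun x => mul_le_mul_of_nonneg_left (hC _) (hf.1 x)) (hf.summable.mul_right C)
  _ = C := by rw [tsum_mul_right, hf.2, one_mul]

end ProbabilityMeasure

section ConvolutionPower

variable {G : Type*} [Group G] {μ : G → ℝ}

theorem convPow_one (μ : G → ℝ) : convPow μ 1 = μ := by
  funext y
  simp [convPow, conv]

theorem isProb_convPow (hμ : IsProb μ) (n : ℕ) : IsProb (convPow μ n) := by
  induction n with
  | zero => exact ⟨fun x => by simp only [convPow]; positivity, tsum_ite_eq 1 fun _ => 1⟩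
  | succ n ih => exact isProb_conv ih hμ

theorem convPow_add (hμ : IsProb μ) (m n : ℕ) :
    convPow μ (m + n) = conv (convPow μ m) (convPow μ n) := by
  have hsum (k : ℕ) := (isProb_convPow hμ k).summable
  induction n with
  | zero =>
    funext y
    rw [conv, tsum_eq_single y fun x hx => by simp [convPow, inv_mul_eq_one, hx]]
    simp [convPow]
  | succ n ih =>
    rw [← add_assoc, convPow, ih, conv_assoc (hsum m) (hsum n) hμ.summable, convPow]

theorem convPow_succ' (hμ : IsProb μ) (n : ℕ) : convPow μ (n + 1) = conv μ (convPow μ n) := by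
  rw [add_comm, convPow_add hμ, convPow_one]

theorem measSymm_convPow (hμ : IsProb μ) (hsymm : MeasSymm μ) (n : ℕ) :
    MeasSymm (convPow μ n) := by
  induction n with
  | zero => exact fun x => by simp [convPow]
  | succ n ih =>
    intro x
    rw [convPow, conv_inv_of_measSymm ih hsymm, ← convPow_succ' hμ, convPow]

theorem convPow_mul_le (hμ : IsProb μ) (m n : ℕ) (x y : G) :
    convPow μ m x * convPow μ n y ≤ convPow μ (m + n) (x * y) := by
  rw [convPow_add hμ]
  exact mul_le_conv (isProb_convPow hμ m) (isProb_convPow hμ n) x y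

theorem convPow_mul_pos (hμ : IsProb μ) {m n : ℕ} {x y : G} (hx : 0 < convPow μ m x)
    (hy : 0 < convPow μ n y) : 0 < convPow μ (m + n) (x * y) :=
  (mul_pos hx hy).trans_le (convPow_mul_le hμ m n x y)

theorem exists_convPow_pos (hμ : IsProb μ) (hsymm : MeasSymm μ) (hgen : GeneratingSupport μ)
    (x : G) : ∃ n, 0 < convPow μ n x := by
  induction hgen.ge (Subgroup.mem_top x) using Subgroup.closure_induction with
  | mem x hx => exact ⟨1, (convPow_one μ).symm ▸ hx⟩
  | one => exact ⟨0, by simp [convPow]⟩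
  | mul x y _ _ hx hy =>
    obtain ⟨⟨m, hm⟩, n, hn⟩ := hx, hy
    exact ⟨m + n, convPow_mul_pos hμ hm hn⟩
  | inv x _ hx =>
    obtain ⟨n, hn⟩ := hx
    exact ⟨n, by rwa [measSymm_convPow hμ hsymm]⟩

theorem eventually_convPow_one_pos (hμ : IsProb μ) (haper : IsAperiodic μ) :
    ∀ᶠ n in atTop, 0 < convPow μ n 1 := by
  let returnTimes : AddSubmonoid ℕ :=
    { carrier := {n | 0 < convPow μ n 1}
      zero_mem' := by simp [convPow]
      add_mem' := fun hm hn => by simpa using convPow_mul_pos hμ hm hn }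
  have hgcd : Nat.setGcd (returnTimes : Set ℕ) = 1 :=
    haper _ fun n _ hn => Nat.setGcd_dvd_of_mem hn
  obtain ⟨N, hN⟩ := Nat.exists_mem_closure_of_ge (returnTimes : Set ℕ)
  filter_upwards [eventually_ge_atTop N] with n hn
  have h := hN n hn (hgcd ▸ one_dvd n)
  rwa [AddSubmonoid.closure_eq] at h

theorem one_mem_Amu (hμ : IsProb μ) (haper : IsAperiodic μ) : 1 ∈ Amu μ :=
  tendsto_const_nhds.congr' <|
    (eventually_convPow_one_pos hμ haper).mono fun _ hn => (div_self hn.ne').symm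

theorem l2inner_convPow_ltrans (hμ : IsProb μ) (hsymm : MeasSymm μ) (m n : ℕ) (x : G) :
    l2inner (convPow μ m) (ltrans x (convPow μ n)) = convPow μ (m + n) x := by
  rw [l2inner_ltrans_of_measSymm _ (measSymm_convPow hμ hsymm n), convPow_add hμ]

theorem l2norm_convPow_sq (hμ : IsProb μ) (hsymm : MeasSymm μ) (n : ℕ) :
    l2norm (convPow μ n) ^ 2 = convPow μ (n + n) 1 := by
  rw [← l2inner_self, ← l2inner_convPow_ltrans hμ hsymm, ltrans_one]

theorem convPow_add_self_le (hμ : IsProb μ) (hsymm : MeasSymm μ) (n : ℕ) (x : G) :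
    convPow μ (n + n) x ≤ convPow μ (n + n) 1 := by
  have hn := (isProb_convPow hμ n).memℓp_two
  calc convPow μ (n + n) x
      = l2inner (convPow μ n) (ltrans x (convPow μ n)) :=
        (l2inner_convPow_ltrans hμ hsymm n n x).symm
    _ ≤ l2norm (convPow μ n) * l2norm (ltrans x (convPow μ n)) :=
        l2inner_le_l2norm_mul_l2norm hn (memℓp_two_ltrans hn x)
    _ = convPow μ (n + n) 1 := by rw [l2norm_ltrans, ← sq, l2norm_convPow_sq hμ hsymm]

theorem l2norm_convPow_pos (hμ : IsProb μ) (hsymm : MeasSymm μ) (n : ℕ) :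
    0 < l2norm (convPow μ n) := by
  obtain ⟨x, hx⟩ := (isProb_convPow hμ n).exists_pos
  refine (l2norm_nonneg _).lt_of_ne' (pow_ne_zero_iff two_ne_zero |>.mp ?_)
  rw [l2norm_convPow_sq hμ hsymm, ← mul_inv_cancel x]
  exact (convPow_mul_pos hμ hx (by rwa [measSymm_convPow hμ hsymm])).ne'

theorem l2norm_convPow_add_le (hμ : IsProb μ) (hsymm : MeasSymm μ) (k n : ℕ) :
    l2norm (convPow μ (k + n)) ≤ l2norm (convPow μ n) := by
  refine le_of_sq_le_sq ?_ (l2norm_nonneg _)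
  rw [l2norm_convPow_sq hμ hsymm, l2norm_convPow_sq hμ hsymm, add_add_add_comm, convPow_add hμ]
  exact conv_le_of_le (isProb_convPow hμ _) (isProb_convPow hμ _)
    (convPow_add_self_le hμ hsymm n) 1

theorem memℓp_two_xi (hμ : IsProb μ) (n : ℕ) : Memℓp (xi μ n) 2 := by
  have h := (isProb_convPow hμ n).memℓp_two.const_smul (l2norm (convPow μ n))⁻¹
  have hxi : xi μ n = (l2norm (convPow μ n))⁻¹ • convPow μ n := funext fun x => div_eq_inv_mul _ _
  rwa [hxi]

theorem l2norm_xi (hμ : IsProb μ) (hsymm : MeasSymm μ) (n : ℕ) : l2norm (xi μ n) = 1 :=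
  (l2norm_div_const _ (l2norm_nonneg _)).trans (div_self (l2norm_convPow_pos hμ hsymm n).ne')

theorem l2inner_xi_ltrans (hμ : IsProb μ) (hsymm : MeasSymm μ) (n : ℕ) (x : G) :
    l2inner (xi μ n) (ltrans x (xi μ n)) = convPow μ (n + n) x / convPow μ (n + n) 1 := by
  rw [← l2norm_convPow_sq hμ hsymm, ← l2inner_convPow_ltrans hμ hsymm]
  exact l2inner_div_const _ _ _

theorem tendsto_l2norm_ltrans_xi_sub (hμ : IsProb μ) (hsymm : MeasSymm μ) {c : G}
    (hc : c ∈ Amu μ) : Tendsto (fun n => l2norm (ltrans c (xi μ n) - xi μ n)) atTop (𝓝 0) := by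
  have hsq (n : ℕ) : l2norm (ltrans c (xi μ n) - xi μ n) ^ 2 =
      2 - 2 * (convPow μ (n + n) c / convPow μ (n + n) 1) := by
    have hn := memℓp_two_xi hμ n
    rw [l2norm_sub_sq (memℓp_two_ltrans hn c) hn, l2norm_ltrans, l2norm_xi hμ hsymm,
      l2inner_comm, l2inner_xi_ltrans hμ hsymm]
    ring
  have hratio : Tendsto (fun n => convPow μ (n + n) c / convPow μ (n + n) 1) atTop (𝓝 1) :=
    hc.comp (tendsto_atTop_mono (fun n => Nat.le_add_left n n) tendsto_id)
  have hlim := ((hratio.const_mul 2).const_sub 2).sqrt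
  simpa [← hsq, Real.sqrt_sq (l2norm_nonneg _)] using hlim

theorem convPow_mul_xi_le (hμ : IsProb μ) (hsymm : MeasSymm μ) (k n : ℕ) (x g : G) :
    convPow μ k x * xi μ n g ≤ xi μ (k + n) (x * g) := calc
  convPow μ k x * xi μ n g = convPow μ k x * convPow μ n g / l2norm (convPow μ n) :=
    (mul_div_assoc _ _ _).symm
  _ ≤ convPow μ (k + n) (x * g) / l2norm (convPow μ (k + n)) :=
    div_le_div₀ ((isProb_convPow hμ _).1 _) (convPow_mul_le hμ k n x g)
      (l2norm_convPow_pos hμ hsymm _) (l2norm_convPow_add_le hμ hsymm k n)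

end ConvolutionPower

section AsymptoticMass

variable {G : Type*} [Group G] {g : G} {E : Set G} {μ : G → ℝ}

theorem convPow_mul_l2norm_domRestrict_smul_xi_le (hμ : IsProb μ) (hsymm : MeasSymm μ) (k n : ℕ)
    (x : G) (E : Set G) :
    convPow μ k x⁻¹ * l2norm ((x • E).domRestrict (xi μ n)) ≤
      l2norm (E.domRestrict (xi μ (k + n))) := by
  have hk := (isProb_convPow hμ k).1 x⁻¹
  rw [← l2norm_const_mul _ hk, ← l2norm_domRestrict_ltrans x]
  refine l2norm_le_of_le (memℓp_two_domRestrict (memℓp_two_ltrans (memℓp_two_xi hμ _) x) _)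
    (fun g => mul_nonneg hk ?_) fun g => convPow_mul_xi_le hμ hsymm k n x⁻¹ g
  exact div_nonneg ((isProb_convPow hμ n).1 g) (l2norm_nonneg _)

theorem tendsto_l2norm_domRestrict_smul_xi (hμ : IsProb μ) (hsymm : MeasSymm μ)
    (hgen : GeneratingSupport μ)
    (hE : Tendsto (fun n => l2norm (E.domRestrict (xi μ n))) atTop (𝓝 0)) (x : G) :
    Tendsto (fun n => l2norm ((x • E).domRestrict (xi μ n))) atTop (𝓝 0) := by
  obtain ⟨k, hk⟩ := exists_convPow_pos hμ hsymm hgen x⁻¹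
  have hlim : Tendsto (fun n => l2norm (E.domRestrict (xi μ (k + n))) / convPow μ k x⁻¹)
      atTop (𝓝 0) := by
    simpa using (hE.comp (tendsto_atTop_mono (Nat.le_add_left · k) tendsto_id)).div_const _
  refine squeeze_zero (fun n => l2norm_nonneg _) (fun n => ?_) hlim
  rw [le_div_iff₀' hk]
  exact convPow_mul_l2norm_domRestrict_smul_xi_le hμ hsymm k n x E

theorem notMem_Amu_of_isWandering (hμ : IsProb μ) (hsymm : MeasSymm μ)
    (hgen : GeneratingSupport μ) (hE : IsWandering g E) {s : Finset G}
    (hs : ⋃ x ∈ s, x • E = Set.univ) : g ∉ Amu μ := by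
  intro hg
  have hnull := tendsto_l2norm_domRestrict_of_isWandering (memℓp_two_xi hμ) (l2norm_xi hμ hsymm)
    (tendsto_l2norm_ltrans_xi_sub hμ hsymm hg) hE
  have hsum : Tendsto (fun n => ∑ x ∈ s, l2norm ((x • E).domRestrict (xi μ n)) ^ 2)
      atTop (𝓝 0) := by
    simpa using tendsto_finsetSum s fun x _ =>
      (tendsto_l2norm_domRestrict_smul_xi hμ hsymm hgen hnull x).pow 2
  refine one_pos.not_ge (ge_of_tendsto' hsum fun n => ?_)
  simpa [l2norm_xi hμ hsymm] using l2norm_sq_le_sum_domRestrict (memℓp_two_xi hμ n) hs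

end AsymptoticMass

section FreeGroup

open FreeGroup

variable {α : Type*}

theorem exists_ne_notMem_pair [Nontrivial α] (s t : α × Bool) :
    ∃ w₁ w₂, w₁ ≠ w₂ ∧ w₁ ∉ ({s, t} : Set (α × Bool)) ∧ w₂ ∉ ({s, t} : Set (α × Bool)) := by
  obtain ⟨i, j, hij⟩ := exists_pair_ne α
  have hcard : 1 < ((({i, j} : Finset α) ×ˢ Finset.univ) \ {s, t}).card := by
    refine lt_of_lt_of_le ?_ (Finset.le_card_sdiff _ _)
    have := Finset.card_le_two (a := s) (b := t)
    simp only [Finset.card_product, Finset.card_pair hij, Finset.card_univ, Fintype.card_bool]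
    lia
  obtain ⟨w₁, h₁, w₂, h₂, hne⟩ := Finset.one_lt_card.mp hcard
  exact ⟨w₁, w₂, hne, by simpa using (Finset.mem_sdiff.mp h₁).2,
    by simpa using (Finset.mem_sdiff.mp h₂).2⟩

theorem mk_mul_mem_startsWith [DecidableEq α] {L : List (α × Bool)} (hL : IsReduced L)
    {s e : α × Bool} (hs : s ∈ L.head?) (he : e ∈ L.getLast?) {h : FreeGroup α}
    (hh : h ∉ startsWith (e.1, !e.2)) :
    mk L * h ∈ startsWith s := by
  induction L generalizing s with
  | nil => simp at hs
  | cons t L ih =>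
    obtain rfl : t = s := by simpa using hs
    cases L with
    | nil =>
      obtain rfl : t = e := by simpa using he
      exact startsWith_mk_mul h hh
    | cons r L =>
      obtain ⟨htr, hL⟩ := isReduced_cons_cons.mp hL
      have hr : mk (r :: L) * h ∈ startsWith r := ih hL rfl (by simpa using he)
      have hne : r ≠ (t.1, !t.2) := by
        rintro rfl
        simp at htr
      rw [← List.singleton_append, ← mul_mk, mul_assoc]
      exact startsWith_mk_mul _ ((startsWith.disjoint_iff_ne.mpr hne).notMem_of_mem_left hr)

theorem isWandering_mk [DecidableEq α] {L : List (α × Bool)} (hL : IsCyclicallyReduced L)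
    {s e : α × Bool} (hs : s ∈ L.head?) (he : e ∈ L.getLast?) :
    IsWandering (mk L) (startsWith s ∪ startsWith (e.1, !e.2))ᶜ := by
  refine isWandering_compl_union ?_ (startsWith.disjoint_iff_ne.mpr ?_)
  · rintro _ ⟨h, hh, rfl⟩
    exact mk_mul_mem_startsWith hL.isReduced hs he hh
  · rintro rfl
    simpa using hL.2 e he _ hs

theorem smul_startsWith_union_smul_startsWith [DecidableEq α] {w₁ w₂ : α × Bool} (hw : w₁ ≠ w₂) :
    (mk [w₁])⁻¹ • startsWith w₁ ∪ (mk [w₂])⁻¹ • startsWith w₂ = Set.univ := by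
  refine Set.eq_univ_of_forall fun h => ?_
  have hinv : (w₁.1, !w₁.2) ≠ (w₂.1, !w₂.2) := by simpa [Prod.ext_iff] using hw
  simp only [Set.mem_union, Set.mem_inv_smul_set_iff]
  by_cases h₁ : h ∈ startsWith (w₁.1, !w₁.2)
  · exact .inr <| startsWith_mk_mul h <|
      (startsWith.disjoint_iff_ne.mpr hinv).notMem_of_mem_left h₁
  · exact .inl <| startsWith_mk_mul h h₁

theorem exists_isWandering_mk [Nontrivial α] {L : List (α × Bool)} (hL : IsCyclicallyReduced L)
    (hne : L ≠ []) :
    ∃ E, IsWandering (mk L) E ∧ ∃ x y : FreeGroup α, x • E ∪ y • E = Set.univ := by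
  obtain ⟨w₁, w₂, hw, h₁, h₂⟩ :=
    exists_ne_notMem_pair (L.head hne) ((L.getLast hne).1, !(L.getLast hne).2)
  simp only [Set.mem_insert_iff, Set.mem_singleton_iff, not_or] at h₁ h₂
  refine ⟨_, isWandering_mk hL (List.head_mem_head? hne) (List.getLast_mem_getLast? hne),
    (mk [w₁])⁻¹, (mk [w₂])⁻¹, Set.univ_subset_iff.mp ?_⟩
  rw [← smul_startsWith_union_smul_startsWith hw]
  have hsub {w : α × Bool} {s t : α × Bool} (hs : w ≠ s) (ht : w ≠ t) :
      startsWith w ⊆ (startsWith s ∪ startsWith t)ᶜ :=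
    (Set.disjoint_union_right.mpr
      ⟨startsWith.disjoint_iff_ne.mpr hs, startsWith.disjoint_iff_ne.mpr ht⟩).subset_compl_right
  exact Set.union_subset_union (Set.smul_set_mono (hsub h₁.1 h₁.2))
    (Set.smul_set_mono (hsub h₂.1 h₂.2))

theorem exists_isWandering_of_ne_one [Nontrivial α] {c : FreeGroup α} (hc : c ≠ 1) :
    ∃ E, IsWandering c E ∧ ∃ x y : FreeGroup α, x • E ∪ y • E = Set.univ := by
  set L := reduceCyclically c.toWord
  set u := mk (reduceCyclically.conjugator c.toWord)
  have hconj : c = u * mk L * u⁻¹ := by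
    rw [inv_mk, mul_mk, mul_mk, reduceCyclically.conj_conjugator_reduceCyclically, mk_toWord]
  have hL : L ≠ [] := by
    intro h
    simp [hconj, h, ← one_eq_mk] at hc
  obtain ⟨E, hE, x, y, hxy⟩ :=
    exists_isWandering_mk (reduceCyclically.isCyclicallyReduced isReduced_toWord) hL
  refine ⟨u • E, hconj ▸ hE.conj u, x * u⁻¹, y * u⁻¹, ?_⟩
  simpa only [smul_smul, inv_mul_cancel_right] using hxy

end FreeGroup

theorem stmt9_general {α : Type*} [Nontrivial α] (μ : FreeGroup α → ℝ) (hprob : IsProb μ)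
    (hsymm : MeasSymm μ) (haper : IsAperiodic μ) (hgen : GeneratingSupport μ) : Amu μ = {1} := by
  refine Set.eq_singleton_iff_unique_mem.mpr ⟨one_mem_Amu hprob haper, fun c hc => ?_⟩
  by_contra hc1
  obtain ⟨E, hE, x, y, hxy⟩ := exists_isWandering_of_ne_one hc1
  refine notMem_Amu_of_isWandering hprob hsymm hgen hE (s := {x, y}) ?_ hc
  simpa using hxy

theorem stmt9 {α : Type*} [Finite α] [DecidableEq α] (a b : α) (hab : a ≠ b)
    (μ : FreeGroup α → ℝ)
    (hprob : IsProb μ) (hsymm : MeasSymm μ) (haper : IsAperiodic μ)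
    (hgen : GeneratingSupport μ) (he : 0 < μ 1)
    (hswap : ∀ x : FreeGroup α, μ (FreeGroup.map (Equiv.swap a b) x) = μ x) :
    Amu μ = {1} :=
  have : Nontrivial α := ⟨a, b, hab⟩
  stmt9_general μ hprob hsymm haper hgen
end
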